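/- Let C₄ be the square graph on vertices {w, x, y, z} with edge set {wx, xy, yz, zw}, so that A(C₄) ≅ F₂ × F₂, and set g = y·z ∈ A(C₄). For every nonzero integer N, the subgroup G_N of A(C₄) generated by {w^N, x^N, g^N} is not isomorphic, as an abstract group, to any right-angled Artin group: for every finite simple graph Δ there is no group isomorphism G_N ≅ A(Δ). -/

import Mathlib

/-- The relators of the right-angled Artin group on a simple graph `Γ`:
one commutator for each edge. -/
def raagRels {V : Type*} (Γ : SimpleGraph V) : Set (FreeGroup V) :=
  {r | ∃ u v : V, Γ.Adj u v ∧
    r = FreeGroup.of u * FreeGroup.of v * (FreeGroup.of u)⁻¹ * (FreeGroup.of v)⁻¹}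

/-- The square graph `C₄` on vertices `w = 0, x = 1, y = 2, z = 3` with
edge set `{wx, xy, yz, zw}`, so `A(C₄) ≅ F₂ × F₂`. -/
def sqC4 : SimpleGraph (Fin 4) :=
  SimpleGraph.fromRel (fun i j => (i, j) ∈
    ([(0,1),(1,2),(2,3),(3,0)] : List (Fin 4 × Fin 4)))

/-! A central element of `G_N` has no exponent in `w`, `x` or `y`, because commuting elements of a
right-angled Artin group have proportional exponents at any two non-adjacent vertices (map to the
Heisenberg group). The `N`-th power of its class in the abelianization is therefore trivial.

Now suppose `G_N ≅ A(Δ)`. Counting homomorphisms to a cyclic group of order coprime to `N` shows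
that `Δ` has three vertices. A universal vertex would be central with nonzero exponent, so there
is none; hence `Δ` has at most one edge, and `A(Δ)` maps onto the group `P = ⟨a, b, c | [a, b]⟩`.
Since `w ^ N` and `x ^ N` commute, `P` in turn maps onto `G_N`. The composite `P → G_N ≅ A(Δ) → P`
is a surjective endomorphism of a finitely generated group, so by Mal'cev's argument its kernel
dies in every finite quotient of `P`. But `[a, c * b * c⁻¹]` is killed, as `g ^ N` acts on `x ^ N`
by conjugation as `z ^ N` does and both `x` and `z` commute with `w`, while it survives in the
symmetric group on three letters. -/

open Function PresentedGroup

/-- The right-angled Artin group `A(Γ)`. -/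
abbrev RAAG {V : Type*} (Γ : SimpleGraph V) : Type _ := PresentedGroup (raagRels Γ)

namespace RAAG

variable {V G : Type*} [Group G] {Γ : SimpleGraph V}

/-- The homomorphism from `A(Γ)` given by its universal property: the images of the vertices may be
any elements which commute along the edges. -/
def lift (f : V → G) (hf : ∀ u v, Γ.Adj u v → Commute (f u) (f v)) : RAAG Γ →* G :=
  toGroup (f := f) <| by
    rintro r ⟨u, v, huv, rfl⟩
    simp [(hf u v huv).eq]

@[simp]
theorem lift_of (f : V → G) (hf : ∀ u v, Γ.Adj u v → Commute (f u) (f v)) (v : V) :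
    lift f hf (of v) = f v :=
  toGroup.of _

theorem lift_surjective {f : V → G} (hf : ∀ u v, Γ.Adj u v → Commute (f u) (f v))
    (hgen : Subgroup.closure (Set.range f) = ⊤) : Surjective (lift f hf) := by
  rw [← MonoidHom.range_eq_top, eq_top_iff, ← hgen, Subgroup.closure_le]
  rintro _ ⟨v, rfl⟩
  exact ⟨of v, lift_of f hf v⟩

theorem commute_of_adj {u v : V} (h : Γ.Adj u v) : Commute (of u : RAAG Γ) (of v) := by
  have hrel : mk (raagRels Γ) (FreeGroup.of u * FreeGroup.of v * (FreeGroup.of u)⁻¹ *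
      (FreeGroup.of v)⁻¹) = 1 := one_of_mem ⟨u, v, h, rfl⟩
  exact commutatorElement_eq_one_iff_commute.mp hrel

theorem of_mem_center_of_isUniversal {v : V} (hv : Γ.IsUniversal v) :
    (of v : RAAG Γ) ∈ Subgroup.center (RAAG Γ) := by
  rw [Subgroup.mem_center_iff]
  intro g
  refine Subgroup.mem_centralizer_singleton_iff.mp (generated_by _ _ (fun u ↦ ?_) g)
  rw [Subgroup.mem_centralizer_singleton_iff]
  rcases eq_or_ne v u with rfl | hvu
  · rfl
  · exact (commute_of_adj (hv hvu)).symm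

instance [Finite V] : Group.FG (RAAG Γ) :=
  Group.fg_of_surjective (mk_surjective (raagRels Γ))

/-- Homomorphisms from `A(Γ)` to a commutative group are arbitrary labellings of the vertices. -/
def homEquiv (Γ : SimpleGraph V) (C : Type*) [CommGroup C] : (RAAG Γ →* C) ≃ (V → C) where
  toFun φ v := φ (of v)
  invFun f := lift f fun _ _ _ ↦ Commute.all _ _
  left_inv φ := PresentedGroup.ext fun v ↦ by simp
  right_inv f := by ext; simp

open Classical in
/-- The exponent sum of the vertex `v` in an element of `A(Γ)`. -/
noncomputable def exponent (v : V) : RAAG Γ →* Multiplicative ℤ :=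
  lift (fun t ↦ Multiplicative.ofAdd (if t = v then 1 else 0)) fun _ _ _ ↦ Commute.all _ _

@[simp]
theorem exponent_of_self (v : V) : exponent v (of v : RAAG Γ) = Multiplicative.ofAdd 1 := by
  simp [exponent]

@[simp]
theorem exponent_of_of_ne {u v : V} (h : u ≠ v) : exponent v (of u : RAAG Γ) = 1 := by
  simp [exponent, h]

end RAAG

/-- The Heisenberg group over `R`: the triple `(x, y, z)` stands for the matrix
`[[1, x, z], [0, 1, y], [0, 0, 1]]`. -/
@[ext]
structure HeisenbergGroup (R : Type*) where
  x : R
  y : R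
  z : R

namespace HeisenbergGroup

variable {R : Type*} [Ring R]

instance : Mul (HeisenbergGroup R) := ⟨fun g h ↦ ⟨g.x + h.x, g.y + h.y, g.z + h.z + g.x * h.y⟩⟩

instance : One (HeisenbergGroup R) := ⟨⟨0, 0, 0⟩⟩

instance : Inv (HeisenbergGroup R) := ⟨fun g ↦ ⟨-g.x, -g.y, -g.z + g.x * g.y⟩⟩

@[simp] theorem mul_x (g h : HeisenbergGroup R) : (g * h).x = g.x + h.x := rfl
@[simp] theorem mul_y (g h : HeisenbergGroup R) : (g * h).y = g.y + h.y := rfl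
@[simp] theorem mul_z (g h : HeisenbergGroup R) : (g * h).z = g.z + h.z + g.x * h.y := rfl
@[simp] theorem one_x : (1 : HeisenbergGroup R).x = 0 := rfl
@[simp] theorem one_y : (1 : HeisenbergGroup R).y = 0 := rfl
@[simp] theorem one_z : (1 : HeisenbergGroup R).z = 0 := rfl
@[simp] theorem inv_x (g : HeisenbergGroup R) : g⁻¹.x = -g.x := rfl
@[simp] theorem inv_y (g : HeisenbergGroup R) : g⁻¹.y = -g.y := rfl
@[simp] theorem inv_z (g : HeisenbergGroup R) : g⁻¹.z = -g.z + g.x * g.y := rfl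

instance : Group (HeisenbergGroup R) :=
  Group.ofLeftAxioms
    (fun _ _ _ ↦ by
      ext <;> simp only [mul_x, mul_y, mul_z, add_mul, mul_add] <;> abel)
    (fun _ ↦ by ext <;> simp)
    (fun _ ↦ by ext <;> simp)

/-- The coordinate `x` as a homomorphism to the additive group of `R`. -/
def xHom : HeisenbergGroup R →* Multiplicative R where
  toFun g := Multiplicative.ofAdd g.x
  map_one' := rfl
  map_mul' _ _ := rfl

/-- The coordinate `y` as a homomorphism to the additive group of `R`. -/
def yHom : HeisenbergGroup R →* Multiplicative R where
  toFun g := Multiplicative.ofAdd g.y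
  map_one' := rfl
  map_mul' _ _ := rfl

theorem x_mul_y_eq_of_commute {g h : HeisenbergGroup R} (hgh : Commute g h) :
    g.x * h.y = h.x * g.y := by
  have hz : g.z + h.z + g.x * h.y = h.z + g.z + h.x * g.y := congrArg z hgh.eq
  rwa [add_comm h.z, add_left_cancel_iff] at hz

end HeisenbergGroup

namespace RAAG

variable {V : Type*} {Γ : SimpleGraph V}

open Classical in
/-- The homomorphism from `A(Γ)` to the integral Heisenberg group whose `x` and `y` coordinates are
the exponent sums of the non-adjacent vertices `u` and `v`. -/
noncomputable def toHeisenberg {u v : V} (huv : ¬ Γ.Adj u v) : RAAG Γ →* HeisenbergGroup ℤ :=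
  lift (fun t ↦ ⟨if t = u then 1 else 0, if t = v then 1 else 0, 0⟩) fun s t hst ↦ by
    have hst_ne : ¬ (t = v ∧ s = u) := by rintro ⟨rfl, rfl⟩; exact huv hst
    have hts_ne : ¬ (s = v ∧ t = u) := by rintro ⟨rfl, rfl⟩; exact huv hst.symm
    exact HeisenbergGroup.ext (add_comm _ _) (add_comm _ _) (by simp [← ite_and, hst_ne, hts_ne])

open Classical in
@[simp]
theorem toHeisenberg_of {u v : V} (huv : ¬ Γ.Adj u v) (t : V) :
    toHeisenberg huv (of t) = ⟨if t = u then 1 else 0, if t = v then 1 else 0, 0⟩ :=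
  lift_of _ _ t

theorem toHeisenberg_x {u v : V} (huv : ¬ Γ.Adj u v) (h : RAAG Γ) :
    (toHeisenberg huv h).x = (exponent u h).toAdd := by
  have heq : HeisenbergGroup.xHom.comp (toHeisenberg huv) = exponent u := by
    ext
    simp [exponent, HeisenbergGroup.xHom]
  exact congrArg Multiplicative.toAdd (DFunLike.congr_fun heq h)

theorem toHeisenberg_y {u v : V} (huv : ¬ Γ.Adj u v) (h : RAAG Γ) :
    (toHeisenberg huv h).y = (exponent v h).toAdd := by
  have heq : HeisenbergGroup.yHom.comp (toHeisenberg huv) = exponent v := by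
    ext
    simp [exponent, HeisenbergGroup.yHom]
  exact congrArg Multiplicative.toAdd (DFunLike.congr_fun heq h)

theorem exponent_mul_exponent_eq_of_commute {u v : V} (huv : ¬ Γ.Adj u v) {h k : RAAG Γ}
    (hhk : Commute h k) :
    (exponent u h).toAdd * (exponent v k).toAdd = (exponent u k).toAdd * (exponent v h).toAdd := by
  simpa only [toHeisenberg_x, toHeisenberg_y] using
    HeisenbergGroup.x_mul_y_eq_of_commute (hhk.map (toHeisenberg huv))

end RAAG

section FinitelyGenerated

variable {M S : Type*} [Monoid M] [Monoid.FG M] [Monoid S] [Finite S]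

instance finite_monoidHom_of_fg : Finite (M →* S) := by
  obtain ⟨T, hT, hTfin⟩ := Monoid.fg_iff.mp ‹Monoid.FG M›
  have := hTfin.to_subtype
  refine Finite.of_injective (fun (φ : M →* S) (t : T) ↦ φ t) fun φ ψ h ↦ ?_
  exact MonoidHom.eq_of_eqOn_denseM hT fun t ht ↦ congrFun h ⟨t, ht⟩

-- Precomposition with `f` is injective on the finite set of homomorphisms to `S`, hence surjective.
theorem map_eq_map_of_surjective_endomorphism {f : M →* M} (hf : Surjective f) (φ : M →* S)
    {x y : M} (hxy : f x = f y) : φ x = φ y := by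
  have hinj : Injective fun ψ : M →* S ↦ ψ.comp f := fun _ _ ↦ (MonoidHom.cancel_right hf).mp
  obtain ⟨ψ, rfl⟩ := Finite.surjective_of_injective hinj φ
  exact congrArg ψ hxy

end FinitelyGenerated

section EdgeGraph

open SimpleGraph (edge edge_adj)

variable {G : Type*} [Group G]

theorem commute_of_edge_adj {V : Type*} {s t : V} {f : V → G} (h : Commute (f s) (f t)) (u v : V)
    (huv : (edge s t).Adj u v) : Commute (f u) (f v) := by
  obtain ⟨⟨rfl, rfl⟩ | ⟨rfl, rfl⟩, -⟩ := (edge_adj s t u v).mp huv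
  exacts [h, h.symm]

theorem not_surjective_to_raag_edge {g : Fin 3 → G} (hgen : Subgroup.closure (Set.range g) = ⊤)
    (hcomm : Commute (g 0) (g 1)) (hconj : Commute (g 0) (g 2 * g 1 * (g 2)⁻¹))
    (f : G →* RAAG (edge (0 : Fin 3) 1)) : ¬ Surjective f := by
  intro hf
  let π : RAAG (edge (0 : Fin 3) 1) →* G := RAAG.lift g (commute_of_edge_adj hcomm)
  have hπ : Surjective π := RAAG.lift_surjective _ hgen
  let ρ : RAAG (edge (0 : Fin 3) 1) →* Equiv.Perm (Fin 3) :=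
    RAAG.lift ![.swap 0 1, .swap 0 1, .swap 0 2] (commute_of_edge_adj (.refl _))
  let c : RAAG (edge (0 : Fin 3) 1) := of 2 * of 1 * (of 2)⁻¹
  have hπc : π (of 0 * c) = π (c * of 0) := by simpa [π, c] using hconj.eq
  have hρc : ρ (of 0 * c) = ρ (c * of 0) :=
    map_eq_map_of_surjective_endomorphism (f := f.comp π) (hf.comp hπ) ρ (congrArg f hπc)
  have hρc_ne : ρ (of 0 * c) ≠ ρ (c * of 0) := by
    simp only [ρ, c, map_mul, map_inv, RAAG.lift_of]
    decide
  exact hρc_ne hρc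

end EdgeGraph

section ThreeVertices

variable {W : Type*} {Δ : SimpleGraph W}

theorem exists_isIsolated_of_degree_le_one [Fintype W] [DecidableRel Δ.Adj]
    (hodd : Odd (Fintype.card W)) (hdeg : ∀ v, Δ.degree v ≤ 1) : ∃ v, Δ.IsIsolated v := by
  by_contra! hiso
  have hone (v : W) : Δ.degree v = 1 :=
    (hdeg v).antisymm (Nat.one_le_iff_ne_zero.mpr (Δ.degree_eq_zero v |>.not.mpr (hiso v)))
  have heven := Δ.even_card_odd_degree_vertices
  simp only [hone, odd_one, Finset.filter_true, Finset.card_univ] at heven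
  exact Nat.not_even_iff_odd.mpr hodd heven

theorem exists_isIsolated_of_card_eq_three (hW : Nat.card W = 3) (hΔ : ∀ v, ¬ Δ.IsUniversal v) :
    ∃ v, Δ.IsIsolated v := by
  classical
  have := Nat.finite_of_card_ne_zero (hW ▸ three_ne_zero)
  have := Fintype.ofFinite W
  rw [Nat.card_eq_fintype_card] at hW
  refine exists_isIsolated_of_degree_le_one (hW ▸ by decide) fun v ↦ ?_
  have hlt := Δ.degree_lt_card_verts v
  have hne := (Δ.degree_eq_card_sub_one v).not.mpr (hΔ v)
  omega

theorem exists_surjective_raag_edge (hW : Nat.card W = 3) {v : W} (hv : Δ.IsIsolated v) :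
    ∃ f : RAAG Δ →* RAAG (SimpleGraph.edge (0 : Fin 3) 1), Surjective f := by
  classical
  have := Nat.finite_of_card_ne_zero (hW ▸ three_ne_zero)
  let σ : W ≃ Fin 3 := (Finite.equivFinOfCardEq hW).setValue v 2
  have hσ (u : W) (hu : ¬ Δ.IsIsolated u) : σ u ≠ 2 := by
    rintro h
    rw [σ.injective (h.trans ((Finite.equivFinOfCardEq hW).setValue_eq v 2).symm)] at hu
    exact hu hv
  have hadj (s t : W) (hst : Δ.Adj s t) : (SimpleGraph.edge (0 : Fin 3) 1).Adj (σ s) (σ t) := by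
    have hs := hσ s fun h ↦ h t hst
    have ht := hσ t fun h ↦ h s hst.symm
    have hne := σ.injective.ne hst.ne
    rw [SimpleGraph.edge_adj]
    omega
  refine ⟨RAAG.lift (of ∘ σ) fun s t hst ↦ RAAG.commute_of_adj (hadj s t hst),
    RAAG.lift_surjective _ ?_⟩
  rw [σ.surjective.range_comp, closure_range_of]

end ThreeVertices

theorem nat_card_eq_of_fun_equiv {α β C : Type*} [Finite β] [Finite C] [Nontrivial C]
    (e : (α → C) ≃ (β → C)) : Nat.card α = Nat.card β := by
  have : Finite α := by
    by_contra hα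
    rw [not_finite_iff_infinite] at hα
    exact (e.infinite_iff.mp Pi.infinite_of_left).not_finite inferInstance
  have hpow : Nat.card C ^ Nat.card α = Nat.card C ^ Nat.card β := by
    simpa only [Nat.card_fun] using Nat.card_congr e
  exact Nat.pow_right_injective Finite.one_lt_card hpow

theorem surjective_zpow_of_coprime_card {G : Type*} [Group G] {n : ℤ}
    (hn : (Nat.card G).Coprime n.natAbs) : Surjective fun g : G ↦ g ^ n := by
  obtain ⟨m, rfl | rfl⟩ := n.eq_nat_or_neg
  · simpa [powCoprime] using (powCoprime hn).surjective
  · have hm : (Nat.card G).Coprime m := by simpa using hn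
    simpa [powCoprime, comp_def] using inv_surjective.comp (powCoprime hm).surjective

theorem commute_conj_mul_of_commute {G : Type*} [Group G] {w x y z : G} (hwx : Commute w x)
    (hxy : Commute x y) (hyz : Commute y z) (hzw : Commute z w) :
    Commute w (y * z * x * (y * z)⁻¹) := by
  have hconj : y * z * x * (y * z)⁻¹ = z * x * z⁻¹ := by
    calc y * z * x * (y * z)⁻¹ = z * (y * x * y⁻¹) * z⁻¹ := by rw [hyz.eq]; group
      _ = z * x * z⁻¹ := by rw [hxy.symm.mul_inv_cancel]
  rw [hconj]
  exact (hzw.symm.mul_right hwx).mul_right hzw.symm.inv_right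

/-- The subgroup of `A(C₄)` generated by `w ^ N`, `x ^ N` and `(y * z) ^ N`. -/
abbrev powSubgroup (N : ℤ) : Subgroup (RAAG sqC4) :=
  Subgroup.closure {of 0 ^ N, of 1 ^ N, (of 2 * of 3) ^ N}

namespace powSubgroup

variable {N : ℤ}

/-- The generators `w ^ N`, `x ^ N` and `(y * z) ^ N`, indexed by `0`, `1` and `2`. -/
def gen (N : ℤ) : Fin 3 → powSubgroup N :=
  ![⟨of 0 ^ N, Subgroup.subset_closure (by simp)⟩, ⟨of 1 ^ N, Subgroup.subset_closure (by simp)⟩,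
    ⟨(of 2 * of 3) ^ N, Subgroup.subset_closure (by simp)⟩]

theorem coe_gen (i : Fin 3) : (gen N i : RAAG sqC4) = ![of 0, of 1, of 2 * of 3] i ^ N := by
  fin_cases i <;> rfl

theorem closure_range_gen : Subgroup.closure (Set.range (gen N)) = ⊤ := by
  rw [← Subgroup.closure_closure_coe_preimage]
  congr 1
  ext h
  simp [gen, Subtype.ext_iff, or_comm, or_assoc]

theorem hom_ext {M : Type*} [Monoid M] {φ ψ : powSubgroup N →* M}
    (h : ∀ i, φ (gen N i) = ψ (gen N i)) : φ = ψ :=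
  MonoidHom.eq_of_eqOn_dense closure_range_gen (Set.forall_mem_range.mpr h)

theorem commute_gen_zero_gen_one : Commute (gen N 0) (gen N 1) :=
  Subtype.ext ((RAAG.commute_of_adj (by simp [sqC4])).zpow_zpow N N)

theorem commute_gen_zero_conj_gen_one : Commute (gen N 0) (gen N 2 * gen N 1 * (gen N 2)⁻¹) := by
  have hcomm {u v : Fin 4} (h : sqC4.Adj u v) : Commute (of u ^ N : RAAG sqC4) (of v ^ N) :=
    (RAAG.commute_of_adj h).zpow_zpow N N
  have hyz : (of 2 * of 3 : RAAG sqC4) ^ N = of 2 ^ N * of 3 ^ N :=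
    (RAAG.commute_of_adj (by simp [sqC4])).mul_zpow N
  apply Subtype.ext
  simpa [gen, hyz] using (commute_conj_mul_of_commute (hcomm (u := 0) (v := 1) (by simp [sqC4]))
    (hcomm (v := 2) (by simp [sqC4])) (hcomm (v := 3) (by simp [sqC4]))
    (hcomm (by simp [sqC4]))).eq

theorem bijective_hom_apply_gen {C : Type*} [CommGroup C] (hC : Surjective fun c : C ↦ c ^ N) :
    Bijective fun (φ : powSubgroup N →* C) i ↦ φ (gen N i) := by
  refine ⟨fun φ ψ h ↦ hom_ext (congrFun h), fun f ↦ ?_⟩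
  choose root hroot using hC
  let ψ : RAAG sqC4 →* C :=
    (RAAG.homEquiv sqC4 C).symm ![root (f 0), root (f 1), root (f 2), 1]
  refine ⟨ψ.comp (powSubgroup N).subtype, funext fun i ↦ ?_⟩
  fin_cases i <;> simp_all [ψ, gen, RAAG.homEquiv]

theorem nat_card_vertices_eq_three (hN : N ≠ 0) {W : Type*} {Δ : SimpleGraph W}
    (e : powSubgroup N ≃* RAAG Δ) : Nat.card W = 3 := by
  -- The modulus `|N| + 1` is coprime to `N`, so every element of `C` has an `N`-th root.
  let C := Multiplicative (ZMod (N.natAbs + 1))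
  have : Fact (1 < N.natAbs + 1) := ⟨by omega⟩
  have hC : Surjective fun c : C ↦ c ^ N := surjective_zpow_of_coprime_card (by simp [C])
  let ofEdge : (W → C) ≃ (Fin 3 → C) :=
    (RAAG.homEquiv Δ C).symm.trans <| e.symm.monoidHomCongrLeftEquiv.trans <|
      Equiv.ofBijective _ (bijective_hom_apply_gen hC)
  simpa using nat_card_eq_of_fun_equiv ofEdge

theorem map_zpow_eq_prod_exponent {C : Type*} [CommGroup C] (χ : powSubgroup N →* C)
    (h : powSubgroup N) :
    χ h ^ N = χ (gen N 0) ^ (RAAG.exponent 0 (h : RAAG sqC4)).toAdd *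
      χ (gen N 1) ^ (RAAG.exponent 1 (h : RAAG sqC4)).toAdd *
      χ (gen N 2) ^ (RAAG.exponent 2 (h : RAAG sqC4)).toAdd := by
  let exponentMap (i : Fin 4) : powSubgroup N →* Multiplicative ℤ :=
    (RAAG.exponent i).comp (powSubgroup N).subtype
  have heq : χ ^ N = (zpowersHom C (χ (gen N 0))).comp (exponentMap 0) *
      (zpowersHom C (χ (gen N 1))).comp (exponentMap 1) *
      (zpowersHom C (χ (gen N 2))).comp (exponentMap 2) := hom_ext fun i ↦ by
    fin_cases i <;> simp [exponentMap, coe_gen]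
  simpa [exponentMap] using DFunLike.congr_fun heq h

theorem exponent_eq_one_of_mem_center (hN : N ≠ 0) {h : powSubgroup N}
    (hh : h ∈ Subgroup.center (powSubgroup N)) {i : Fin 4} (hi : i ≠ 3) :
    RAAG.exponent i (h : RAAG sqC4) = 1 := by
  have hcomm (k : powSubgroup N) : Commute (h : RAAG sqC4) k :=
    congrArg Subtype.val (Subgroup.mem_center_iff.mp hh k).symm
  have hexp {u v : Fin 4} (huv : ¬ sqC4.Adj u v) (j : Fin 3) :=
    RAAG.exponent_mul_exponent_eq_of_commute huv (hcomm (gen N j))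
  apply Multiplicative.toAdd.injective
  fin_cases i
  · simpa [coe_gen, hN] using hexp (u := 0) (v := 2) (by simp [sqC4]) 2
  · simpa [coe_gen, hN] using hexp (u := 1) (v := 3) (by simp [sqC4]) 2
  · simpa [coe_gen, hN] using hexp (u := 0) (v := 2) (by simp [sqC4]) 0
  · contradiction

theorem map_eq_one_of_mem_center (hN : N ≠ 0) {C : Type*} [CommGroup C] [IsMulTorsionFree C]
    (χ : powSubgroup N →* C) {h : powSubgroup N} (hh : h ∈ Subgroup.center (powSubgroup N)) :
    χ h = 1 := by
  rw [← IsMulTorsionFree.zpow_eq_one_iff_left hN, map_zpow_eq_prod_exponent]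
  simp [exponent_eq_one_of_mem_center hN hh]

theorem not_isUniversal (hN : N ≠ 0) {W : Type*} {Δ : SimpleGraph W}
    (e : powSubgroup N ≃* RAAG Δ) (v : W) : ¬ Δ.IsUniversal v := by
  intro hv
  have hcenter : e.symm (of v) ∈ Subgroup.center (powSubgroup N) :=
    MulEquivClass.apply_mem_center e.symm (RAAG.of_mem_center_of_isUniversal hv)
  have := map_eq_one_of_mem_center hN ((RAAG.exponent v).comp e.toMonoidHom) hcenter
  simp at this

end powSubgroup

theorem subgroup_not_raag_general (N : ℤ) (hN : N ≠ 0) {W : Type*} (Δ : SimpleGraph W) :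
    ¬ Nonempty (powSubgroup N ≃* RAAG Δ) := by
  rintro ⟨e⟩
  have hW : Nat.card W = 3 := powSubgroup.nat_card_vertices_eq_three hN e
  obtain ⟨v, hv⟩ : ∃ v, Δ.IsIsolated v :=
    exists_isIsolated_of_card_eq_three hW (powSubgroup.not_isUniversal hN e)
  obtain ⟨f, hf⟩ := exists_surjective_raag_edge hW hv
  exact not_surjective_to_raag_edge powSubgroup.closure_range_gen
    powSubgroup.commute_gen_zero_gen_one powSubgroup.commute_gen_zero_conj_gen_one
    (f.comp e.toMonoidHom) (hf.comp e.surjective)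

/-- For `g = y·z` and any nonzero `N`, the subgroup of `A(C₄)` generated by
`w^N, x^N, g^N` is not abstractly isomorphic to any right-angled Artin group. -/
theorem subgroup_not_raag (N : ℤ) (hN : N ≠ 0)
    {W : Type*} [Fintype W] (Δ : SimpleGraph W) :
    ¬ Nonempty (↥(Subgroup.closure
      {PresentedGroup.of (rels := raagRels sqC4) 0 ^ N,
       PresentedGroup.of (rels := raagRels sqC4) 1 ^ N,
       (PresentedGroup.of (rels := raagRels sqC4) 2 * PresentedGroup.of 3) ^ N})
      ≃* PresentedGroup (raagRels Δ)) := by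
  exact subgroup_not_raag_general N hN Δ
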